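/- arXiv:2406.01351 — 3 statements merged into one kernel-verified Lean document; each statement's English description precedes it below -/
import Mathlib

section
/- Let Ω ⊆ ℝ² be open. Let B be the set of all real numbers of the form (∫_Ω (Δψ)² dx)/(∫_Ω |∇ψ|² dx), where ψ : ℝ² → ℝ ranges over smooth functions, compactly supported in Ω and not identically zero; let S be the set of all real numbers of the form (∫_Ω ‖Du‖² dx)/(∫_Ω |u|² dx), where u : ℝ² → ℝ² ranges over smooth vector fields, compactly supported in Ω, not identically zero, and with div u = ∂₁u₁ + ∂₂u₂ = 0 on ℝ². Then B ⊆ S; in particular, if B is nonempty then sInf S ≤ sInf B. -/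
/-!
The perpendicular gradient `u = (∂₂ψ, -∂₁ψ)` of a stream function `ψ` is a divergence-free test
field with `|u|² = |∇ψ|²`, and it is nonzero because a compactly supported function with vanishing
gradient on `ℝ²` is zero. Pointwise, `‖Du‖²` is the sum of the squares of all second derivatives of
`ψ`, so it differs from `(Δψ)²` by `2 ((∂₁∂₂ψ)² - ∂₁∂₁ψ ∂₂∂₂ψ)`, twice the negative of the Hessian
determinant. This has integral zero (`integral_hessian`) by integrating by parts twice. Hence the
buckling quotient of `ψ` is the Stokes quotient of `u`, and `B ⊆ S`; since `S` is bounded below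
by `0`, the inequality of infima follows.
-/

open MeasureTheory

/-- First partial derivative (with respect to the first coordinate of `ℝ × ℝ`). -/
noncomputable def pd1 (f : ℝ × ℝ → ℝ) : ℝ × ℝ → ℝ := fun x => fderiv ℝ f x (1, 0)

/-- Second partial derivative (with respect to the second coordinate of `ℝ × ℝ`). -/
noncomputable def pd2 (f : ℝ × ℝ → ℝ) : ℝ × ℝ → ℝ := fun x => fderiv ℝ f x (0, 1)

/-- The Laplacian on `ℝ × ℝ`. -/
noncomputable def lap (f : ℝ × ℝ → ℝ) : ℝ × ℝ → ℝ := fun x => pd1 (pd1 f) x + pd2 (pd2 f) x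

section DirectionalDerivative

variable {f g : ℝ × ℝ → ℝ}

theorem contDiff_fderiv_apply_const (hf : ContDiff ℝ (⊤ : ℕ∞) f) (v : ℝ × ℝ) :
    ContDiff ℝ (⊤ : ℕ∞) (fun x => fderiv ℝ f x v) :=
  (hf.fderiv_right (m := (⊤ : ℕ∞)) (by simp)).clm_apply contDiff_const

theorem fderiv_fderiv_apply_comm (hf : ContDiff ℝ (⊤ : ℕ∞) f) (v w x : ℝ × ℝ) :
    fderiv ℝ (fun y => fderiv ℝ f y v) x w = fderiv ℝ (fun y => fderiv ℝ f y w) x v := by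
  have hd : DifferentiableAt ℝ (fderiv ℝ f) x :=
    ((hf.fderiv_right (m := (⊤ : ℕ∞)) (by simp)).differentiable (by simp)) x
  have hs : IsSymmSndFDerivAt ℝ f x :=
    hf.contDiffAt.isSymmSndFDerivAt (by
      simpa using WithTop.coe_le_coe.2 (le_top : (2 : ℕ∞) ≤ ⊤))
  rw [fderiv_clm_apply hd (differentiableAt_const v),
    fderiv_clm_apply hd (differentiableAt_const w)]
  simpa using hs w v

theorem integral_mul_fderiv_apply (hf : ContDiff ℝ (⊤ : ℕ∞) f) (hg : ContDiff ℝ (⊤ : ℕ∞) g)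
    (hfc : HasCompactSupport f) (v : ℝ × ℝ) :
    ∫ x, f x * fderiv ℝ g x v = - ∫ x, fderiv ℝ f x v * g x := by
  have hf' := contDiff_fderiv_apply_const hf v
  have hg' := contDiff_fderiv_apply_const hg v
  have hfc' : HasCompactSupport (fun x => fderiv ℝ f x v) := hfc.fderiv_apply ℝ v
  refine integral_mul_fderiv_eq_neg_fderiv_mul_of_integrable ?_ ?_ ?_
    (fun x _ => hf.differentiable (by simp) x) (fun x _ => hg.differentiable (by simp) x)
  · exact (hf'.continuous.mul hg.continuous).integrable_of_hasCompactSupport hfc'.mul_right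
  · exact (hf.continuous.mul hg'.continuous).integrable_of_hasCompactSupport hfc.mul_right
  · exact (hf.continuous.mul hg.continuous).integrable_of_hasCompactSupport hfc.mul_right

end DirectionalDerivative

section Partial

variable {ψ : ℝ × ℝ → ℝ}

theorem contDiff_pd1 (h : ContDiff ℝ (⊤ : ℕ∞) ψ) : ContDiff ℝ (⊤ : ℕ∞) (pd1 ψ) :=
  contDiff_fderiv_apply_const h _

theorem contDiff_pd2 (h : ContDiff ℝ (⊤ : ℕ∞) ψ) : ContDiff ℝ (⊤ : ℕ∞) (pd2 ψ) :=
  contDiff_fderiv_apply_const h _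

theorem hasCompactSupport_pd1 (h : HasCompactSupport ψ) : HasCompactSupport (pd1 ψ) :=
  h.fderiv_apply ℝ _

theorem hasCompactSupport_pd2 (h : HasCompactSupport ψ) : HasCompactSupport (pd2 ψ) :=
  h.fderiv_apply ℝ _

theorem tsupport_pd1_subset : tsupport (pd1 ψ) ⊆ tsupport ψ :=
  tsupport_fderiv_apply_subset ℝ _

theorem tsupport_pd2_subset : tsupport (pd2 ψ) ⊆ tsupport ψ :=
  tsupport_fderiv_apply_subset ℝ _

theorem pd1_pd2_comm (h : ContDiff ℝ (⊤ : ℕ∞) ψ) : pd1 (pd2 ψ) = pd2 (pd1 ψ) :=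
  funext fun x => fderiv_fderiv_apply_comm h _ _ x

theorem pd1_neg (f : ℝ × ℝ → ℝ) (x : ℝ × ℝ) : pd1 (fun y => -f y) x = -pd1 f x := by
  simp [pd1, fderiv_fun_neg]

theorem pd2_neg (f : ℝ × ℝ → ℝ) (x : ℝ × ℝ) : pd2 (fun y => -f y) x = -pd2 f x := by
  simp [pd2, fderiv_fun_neg]

/-- The Hessian determinant of a test function integrates to zero: both sides equal
`-∫ ∂₁ψ ∂₁∂₂∂₂ψ`. -/
theorem integral_hessian (h : ContDiff ℝ (⊤ : ℕ∞) ψ) (hc : HasCompactSupport ψ) :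
    ∫ x, pd1 (pd1 ψ) x * pd2 (pd2 ψ) x = ∫ x, pd2 (pd1 ψ) x * pd2 (pd1 ψ) x := by
  have h1 := contDiff_pd1 h
  have h2 := contDiff_pd2 h
  have e1 : ∫ x, pd1 ψ x * pd1 (pd2 (pd2 ψ)) x = -∫ x, pd1 (pd1 ψ) x * pd2 (pd2 ψ) x :=
    integral_mul_fderiv_apply h1 (contDiff_pd2 h2) (hasCompactSupport_pd1 hc) _
  have e2 : ∫ x, pd1 ψ x * pd2 (pd2 (pd1 ψ)) x = -∫ x, pd2 (pd1 ψ) x * pd2 (pd1 ψ) x :=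
    integral_mul_fderiv_apply h1 (contDiff_pd2 h1) (hasCompactSupport_pd1 hc) _
  rw [pd1_pd2_comm h2, pd1_pd2_comm h] at e1
  linarith

theorem eq_zero_of_pd_eq_zero (h : ContDiff ℝ (⊤ : ℕ∞) ψ) (hc : HasCompactSupport ψ)
    (h1 : ∀ x, pd1 ψ x = 0) (h2 : ∀ x, pd2 ψ x = 0) : ψ = 0 := by
  have hd : ∀ x, fderiv ℝ ψ x = 0 := by
    intro x
    ext
    · simpa [pd1] using h1 x
    · simpa [pd2] using h2 x
  have hconst := is_const_of_fderiv_eq_zero (h.differentiable (by simp)) hd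
  -- A compactly supported function on the noncompact plane vanishes somewhere.
  obtain ⟨x₀, hx₀⟩ : ∃ x₀, x₀ ∉ tsupport ψ := by
    by_contra! hall
    exact noncompact_univ (ℝ × ℝ) (Set.eq_univ_of_forall hall ▸ hc)
  funext x
  rw [hconst x x₀]
  exact image_eq_zero_of_notMem_tsupport hx₀

/-- The perpendicular gradient of `ψ` has Dirichlet energy `∫ (Δψ)²`. -/
theorem integral_lap_sq (h : ContDiff ℝ (⊤ : ℕ∞) ψ) (hc : HasCompactSupport ψ) :
    ∫ x, (lap ψ x) ^ 2 = ∫ x, ((pd1 (pd2 ψ) x) ^ 2 + (pd2 (pd2 ψ) x) ^ 2 +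
      (pd1 (pd1 ψ) x) ^ 2 + (pd2 (pd1 ψ) x) ^ 2) := by
  have h1 := contDiff_pd1 h
  have h2 := contDiff_pd2 h
  have c1 := hasCompactSupport_pd1 hc
  have c2 := hasCompactSupport_pd2 hc
  have k11 := (contDiff_pd1 h1).continuous
  have k21 := (contDiff_pd2 h1).continuous
  have k22 := (contDiff_pd2 h2).continuous
  have i1 : Integrable (fun x => pd1 (pd1 ψ) x * pd1 (pd1 ψ) x + pd2 (pd2 ψ) x * pd2 (pd2 ψ) x) :=
    ((k11.mul k11).integrable_of_hasCompactSupport (hasCompactSupport_pd1 c1).mul_right).add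
      ((k22.mul k22).integrable_of_hasCompactSupport (hasCompactSupport_pd2 c2).mul_right)
  have i2 : Integrable (fun x => 2 * (pd1 (pd1 ψ) x * pd2 (pd2 ψ) x)) :=
    ((k11.mul k22).integrable_of_hasCompactSupport (hasCompactSupport_pd1 c1).mul_right).const_mul 2
  have i3 : Integrable (fun x => 2 * (pd2 (pd1 ψ) x * pd2 (pd1 ψ) x)) :=
    ((k21.mul k21).integrable_of_hasCompactSupport (hasCompactSupport_pd2 c1).mul_right).const_mul 2
  calc ∫ x, (lap ψ x) ^ 2
      = ∫ x, ((pd1 (pd1 ψ) x * pd1 (pd1 ψ) x + pd2 (pd2 ψ) x * pd2 (pd2 ψ) x) +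
          2 * (pd1 (pd1 ψ) x * pd2 (pd2 ψ) x)) := by
        congr 1; funext x; simp only [lap]; ring
    _ = ∫ x, ((pd1 (pd1 ψ) x * pd1 (pd1 ψ) x + pd2 (pd2 ψ) x * pd2 (pd2 ψ) x) +
          2 * (pd2 (pd1 ψ) x * pd2 (pd1 ψ) x)) := by
        rw [integral_add i1 i2, integral_add i1 i3, integral_const_mul, integral_const_mul,
          integral_hessian h hc]
    _ = _ := by
        rw [pd1_pd2_comm h]
        congr 1; funext x; ring

end Partial

theorem stmt3 (Ω : Set (ℝ × ℝ)) (hΩ : IsOpen Ω) (B S : Set ℝ)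
    (hB : B = {r : ℝ | ∃ ψ : ℝ × ℝ → ℝ,
      ContDiff ℝ (⊤ : ℕ∞) ψ ∧ HasCompactSupport ψ ∧ tsupport ψ ⊆ Ω ∧ ψ ≠ 0 ∧
      r = (∫ x in Ω, (lap ψ x) ^ 2) / (∫ x in Ω, ((pd1 ψ x) ^ 2 + (pd2 ψ x) ^ 2))})
    (hS : S = {r : ℝ | ∃ u : ℝ × ℝ → ℝ × ℝ,
      ContDiff ℝ (⊤ : ℕ∞) u ∧ HasCompactSupport u ∧ tsupport u ⊆ Ω ∧ u ≠ 0 ∧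
      (∀ x : ℝ × ℝ, pd1 (fun y => (u y).1) x + pd2 (fun y => (u y).2) x = 0) ∧
      r = (∫ x in Ω,
            ((pd1 (fun y => (u y).1) x) ^ 2 + (pd2 (fun y => (u y).1) x) ^ 2 +
              (pd1 (fun y => (u y).2) x) ^ 2 + (pd2 (fun y => (u y).2) x) ^ 2)) /
          (∫ x in Ω, ((u x).1 ^ 2 + (u x).2 ^ 2))}) :
    B ⊆ S ∧ (B.Nonempty → sInf S ≤ sInf B) := by
  have hsub : B ⊆ S := by
    rw [hB, hS]
    rintro r ⟨ψ, h, hc, hsupp, hne, rfl⟩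
    have h1 := contDiff_pd1 h
    have h2 := contDiff_pd2 h
    have hu0 : ∀ x ∉ tsupport ψ, pd1 ψ x = 0 ∧ pd2 ψ x = 0 := fun x hx =>
      ⟨image_eq_zero_of_notMem_tsupport fun h' => hx (tsupport_pd1_subset h'),
        image_eq_zero_of_notMem_tsupport fun h' => hx (tsupport_pd2_subset h')⟩
    have hut : tsupport (fun x => (pd2 ψ x, -pd1 ψ x)) ⊆ tsupport ψ := by
      refine closure_minimal (fun x hx => ?_) (isClosed_tsupport ψ)
      by_contra hx'
      exact hx (by simp [hu0 x hx'])
    refine ⟨fun x => (pd2 ψ x, -pd1 ψ x), h2.prodMk h1.neg, ?_, hut.trans hsupp, ?_, ?_, ?_⟩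
    · exact hc.of_isClosed_subset (isClosed_tsupport _) hut
    · intro hu
      refine hne (eq_zero_of_pd_eq_zero h hc (fun x => ?_) fun x => ?_)
      · simpa using congrArg Prod.snd (congrFun hu x)
      · simpa using congrArg Prod.fst (congrFun hu x)
    · intro x
      simp only [pd2_neg, pd1_pd2_comm h]
      ring
    · simp only [pd1_neg, pd2_neg, neg_sq]
      -- The second derivatives vanish off `Ω`, so the numerators are integrals over the plane.
      have z : ∀ x ∉ Ω, pd1 (pd1 ψ) x = 0 ∧ pd2 (pd1 ψ) x = 0 ∧
          pd1 (pd2 ψ) x = 0 ∧ pd2 (pd2 ψ) x = 0 := fun x hx =>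
        have hx' : x ∉ tsupport ψ := fun h' => hx (hsupp h')
        ⟨image_eq_zero_of_notMem_tsupport fun h' =>
            hx' (tsupport_pd1_subset (tsupport_pd1_subset h')),
          image_eq_zero_of_notMem_tsupport fun h' =>
            hx' (tsupport_pd1_subset (tsupport_pd2_subset h')),
          image_eq_zero_of_notMem_tsupport fun h' =>
            hx' (tsupport_pd2_subset (tsupport_pd1_subset h')),
          image_eq_zero_of_notMem_tsupport fun h' =>
            hx' (tsupport_pd2_subset (tsupport_pd2_subset h'))⟩
      congr 1
      · rw [setIntegral_eq_integral_of_forall_compl_eq_zero,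
          setIntegral_eq_integral_of_forall_compl_eq_zero, integral_lap_sq h hc]
        · intro x hx
          obtain ⟨a, b, c, d⟩ := z x hx
          simp [a, b, c, d]
        · intro x hx
          obtain ⟨a, b, c, d⟩ := z x hx
          simp [lap, a, d]
      · congr 1; funext x; ring
  refine ⟨hsub, fun hBne => csInf_le_csInf ⟨0, ?_⟩ hBne hsub⟩
  rw [hS]
  rintro r ⟨u, -, -, -, -, -, rfl⟩
  exact div_nonneg (integral_nonneg fun x => by positivity) (integral_nonneg fun x => by positivity)
end

section
/- Let Ω ⊆ ℝ² be open, let ν > 0 and λ ∈ ℝ, and let u : ℝ² → ℝ² and P : ℝ² → ℝ be smooth on Ω with div u = ∂₁u₁ + ∂₂u₂ = 0 and Δu + λu = ∇P on Ω (componentwise). Suppose that v(x,t) := e^{−νλt} u(x) solves the Navier–Stokes equations on Ω × (0,∞) with some pressure, i.e. there exists q : ℝ² × ℝ → ℝ smooth on Ω × (0,∞) such that ∂ₜv + (v·∇)v = νΔₓv − ∇ₓq and divₓ v = 0 on Ω × (0,∞). Then the vorticity ω := ∂₁u₂ − ∂₂u₁ satisfies u₁∂₁ω + u₂∂₂ω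 = 0 on Ω. -/
/-!
Freeze time at `t = 1` and put `c = exp (-ν lam)`. The time derivative of `v` contributes
`-ν lam c u`, which the Stokes equation `Δu + lam u = ∇P` combines with `ν c Δu` into `ν c ∇P`.
The momentum equation therefore reads `c² (u·∇)u = ∇(ν c P - q(·, 1))`, so `(u·∇)u` is a gradient
and its curl vanishes, mixed second derivatives being symmetric (`pd_comm`). Expanding that curl
gives `u·∇ω + (div u) ω` (`curl_advection`), and `div u = 0`.
-/

open MeasureTheory

/-- First spatial partial derivative of a time-dependent function on `(ℝ × ℝ) × ℝ`. -/
noncomputable def pdx1 (f : (ℝ × ℝ) × ℝ → ℝ) : (ℝ × ℝ) × ℝ → ℝ :=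
  fun z => fderiv ℝ (fun y => f (y, z.2)) z.1 (1, 0)

/-- Second spatial partial derivative of a time-dependent function on `(ℝ × ℝ) × ℝ`. -/
noncomputable def pdx2 (f : (ℝ × ℝ) × ℝ → ℝ) : (ℝ × ℝ) × ℝ → ℝ :=
  fun z => fderiv ℝ (fun y => f (y, z.2)) z.1 (0, 1)

/-- Time derivative of a time-dependent function on `(ℝ × ℝ) × ℝ`. -/
noncomputable def pdt (f : (ℝ × ℝ) × ℝ → ℝ) : (ℝ × ℝ) × ℝ → ℝ :=
  fun z => deriv (fun s => f (z.1, s)) z.2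

/-- Spatial Laplacian of a time-dependent function on `(ℝ × ℝ) × ℝ`. -/
noncomputable def lapx (f : (ℝ × ℝ) × ℝ → ℝ) : (ℝ × ℝ) × ℝ → ℝ :=
  fun z => pdx1 (pdx1 f) z + pdx2 (pdx2 f) z

lemma contDiffOn_pd {Ω : Set (ℝ × ℝ)} (hΩ : IsOpen Ω) {f : ℝ × ℝ → ℝ}
    (hf : ContDiffOn ℝ (⊤ : ℕ∞) f Ω) (e : ℝ × ℝ) :
    ContDiffOn ℝ (⊤ : ℕ∞) (fun x => fderiv ℝ f x e) Ω :=
  (hf.fderiv_of_isOpen hΩ (by simp)).clm_apply contDiffOn_const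

lemma differentiableAt_of_smooth {Ω : Set (ℝ × ℝ)} (hΩ : IsOpen Ω) {f : ℝ × ℝ → ℝ}
    (hf : ContDiffOn ℝ (⊤ : ℕ∞) f Ω) {x : ℝ × ℝ} (hx : x ∈ Ω) : DifferentiableAt ℝ f x :=
  (hf.contDiffAt (hΩ.mem_nhds hx)).differentiableAt (by simp)

lemma pd_comm {Ω : Set (ℝ × ℝ)} (hΩ : IsOpen Ω) {f : ℝ × ℝ → ℝ}
    (hf : ContDiffOn ℝ (⊤ : ℕ∞) f Ω) {x : ℝ × ℝ} (hx : x ∈ Ω) :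
    pd1 (pd2 f) x = pd2 (pd1 f) x := by
  have hd : DifferentiableAt ℝ (fderiv ℝ f) x :=
    ((hf.fderiv_of_isOpen (m := (⊤ : ℕ∞)) hΩ (by simp)).contDiffAt
      (hΩ.mem_nhds hx)).differentiableAt (by simp)
  have hs : IsSymmSndFDerivAt ℝ f x :=
    (hf.contDiffAt (hΩ.mem_nhds hx)).isSymmSndFDerivAt
      (by simpa using WithTop.coe_le_coe.2 (le_top : (2 : ℕ∞) ≤ ⊤))
  unfold pd1 pd2
  rw [fderiv_clm_apply hd (differentiableAt_const _),
    fderiv_clm_apply hd (differentiableAt_const _)]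
  simpa using hs.eq (1, 0) (0, 1)

lemma fderiv_mul_add_mul {f g h k : ℝ × ℝ → ℝ} {x : ℝ × ℝ} (hf : DifferentiableAt ℝ f x)
    (hg : DifferentiableAt ℝ g x) (hh : DifferentiableAt ℝ h x) (hk : DifferentiableAt ℝ k x)
    (e : ℝ × ℝ) :
    fderiv ℝ (fun y => f y * g y + h y * k y) x e =
      f x * fderiv ℝ g x e + fderiv ℝ f x e * g x
        + (h x * fderiv ℝ k x e + fderiv ℝ h x e * k x) := by
  rw [fderiv_fun_add (hf.fun_mul hg) (hh.fun_mul hk), fderiv_fun_mul hf hg, fderiv_fun_mul hh hk]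
  simp only [add_apply, smul_apply, smul_eq_mul]
  ring

/-- For a planar field `(a, b)` the curl of the advection term is `u·∇ω + (div u) ω`. -/
lemma curl_advection {Ω : Set (ℝ × ℝ)} (hΩ : IsOpen Ω) {a b : ℝ × ℝ → ℝ}
    (ha : ContDiffOn ℝ (⊤ : ℕ∞) a Ω) (hb : ContDiffOn ℝ (⊤ : ℕ∞) b Ω)
    {x : ℝ × ℝ} (hx : x ∈ Ω) :
    pd1 (fun y => a y * pd1 b y + b y * pd2 b y) x
        - pd2 (fun y => a y * pd1 a y + b y * pd2 a y) x =
      a x * pd1 (fun y => pd1 b y - pd2 a y) x + b x * pd2 (fun y => pd1 b y - pd2 a y) x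
        + (pd1 a x + pd2 b x) * (pd1 b x - pd2 a x) := by
  have da := differentiableAt_of_smooth hΩ ha hx
  have db := differentiableAt_of_smooth hΩ hb hx
  have da1 : DifferentiableAt ℝ (pd1 a) x :=
    differentiableAt_of_smooth hΩ (contDiffOn_pd hΩ ha _) hx
  have da2 : DifferentiableAt ℝ (pd2 a) x :=
    differentiableAt_of_smooth hΩ (contDiffOn_pd hΩ ha _) hx
  have db1 : DifferentiableAt ℝ (pd1 b) x :=
    differentiableAt_of_smooth hΩ (contDiffOn_pd hΩ hb _) hx
  have db2 : DifferentiableAt ℝ (pd2 b) x :=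
    differentiableAt_of_smooth hΩ (contDiffOn_pd hΩ hb _) hx
  have e1 : pd1 (fun y => a y * pd1 b y + b y * pd2 b y) x =
      a x * pd1 (pd1 b) x + pd1 a x * pd1 b x + (b x * pd1 (pd2 b) x + pd1 b x * pd2 b x) :=
    fderiv_mul_add_mul da db1 db db2 _
  have e2 : pd2 (fun y => a y * pd1 a y + b y * pd2 a y) x =
      a x * pd2 (pd1 a) x + pd2 a x * pd1 a x + (b x * pd2 (pd2 a) x + pd2 b x * pd2 a x) :=
    fderiv_mul_add_mul da da1 db da2 _
  have e3 : pd1 (fun y => pd1 b y - pd2 a y) x = pd1 (pd1 b) x - pd1 (pd2 a) x := by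
    change fderiv ℝ (fun y => pd1 b y - pd2 a y) x (1, 0) = _
    rw [fderiv_fun_sub db1 da2]; rfl
  have e4 : pd2 (fun y => pd1 b y - pd2 a y) x = pd2 (pd1 b) x - pd2 (pd2 a) x := by
    change fderiv ℝ (fun y => pd1 b y - pd2 a y) x (0, 1) = _
    rw [fderiv_fun_sub db1 da2]; rfl
  rw [e1, e2, e3, e4, pd_comm hΩ ha hx, pd_comm hΩ hb hx]
  ring

lemma fderiv_const_mul_apply (k : ℝ) (f : ℝ × ℝ → ℝ) (x e : ℝ × ℝ) :
    fderiv ℝ (fun y => k * f y) x e = k * fderiv ℝ f x e := by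
  change fderiv ℝ (k • f) x e = _
  rw [fderiv_const_smul_field]; rfl

/-- No smoothness of `a` is needed for the spatial derivatives: multiplying by a constant commutes
with `fderiv` over a field, junk values included. -/
lemma separated_derivs (κ : ℝ) (a : ℝ × ℝ → ℝ) (x : ℝ × ℝ) (t : ℝ) :
    pdt (fun w => Real.exp (-(κ * w.2)) * a w.1) (x, t) = -κ * (Real.exp (-(κ * t)) * a x) ∧
    pdx1 (fun w => Real.exp (-(κ * w.2)) * a w.1) (x, t) = Real.exp (-(κ * t)) * pd1 a x ∧
    pdx2 (fun w => Real.exp (-(κ * w.2)) * a w.1) (x, t) = Real.exp (-(κ * t)) * pd2 a x ∧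
    lapx (fun w => Real.exp (-(κ * w.2)) * a w.1) (x, t) = Real.exp (-(κ * t)) * lap a x := by
  have h1 : ∀ f : ℝ × ℝ → ℝ, pdx1 (fun w => Real.exp (-(κ * w.2)) * f w.1) =
      fun w => Real.exp (-(κ * w.2)) * pd1 f w.1 :=
    fun f => funext fun w => fderiv_const_mul_apply (Real.exp (-(κ * w.2))) f w.1 _
  have h2 : ∀ f : ℝ × ℝ → ℝ, pdx2 (fun w => Real.exp (-(κ * w.2)) * f w.1) =
      fun w => Real.exp (-(κ * w.2)) * pd2 f w.1 :=
    fun f => funext fun w => fderiv_const_mul_apply (Real.exp (-(κ * w.2))) f w.1 _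
  refine ⟨?_, by rw [h1], by rw [h2], ?_⟩
  · have h : HasDerivAt (fun s : ℝ => Real.exp (-(κ * s)) * a x)
        (Real.exp (-(κ * t)) * (-(κ * 1)) * a x) t :=
      (((hasDerivAt_id t).const_mul κ).neg.exp).mul_const (a x)
    change deriv (fun s : ℝ => Real.exp (-(κ * s)) * a x) t = _
    rw [h.deriv]; ring
  · simp only [lapx, lap, h1, h2]; ring

theorem stmt14 (Ω : Set (ℝ × ℝ)) (hΩ : IsOpen Ω) (ν lam : ℝ) (hν : 0 < ν)
    (u : ℝ × ℝ → ℝ × ℝ) (P : ℝ × ℝ → ℝ)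
    (hu : ContDiffOn ℝ (⊤ : ℕ∞) u Ω) (hP : ContDiffOn ℝ (⊤ : ℕ∞) P Ω)
    (hdiv : ∀ x ∈ Ω, pd1 (fun y => (u y).1) x + pd2 (fun y => (u y).2) x = 0)
    (heq : ∀ x ∈ Ω,
      lap (fun y => (u y).1) x + lam * (u x).1 = pd1 P x ∧
      lap (fun y => (u y).2) x + lam * (u x).2 = pd2 P x)
    (v : (ℝ × ℝ) × ℝ → ℝ × ℝ)
    (hv : v = fun z => Real.exp (-(ν * lam * z.2)) • u z.1)
    (hNS : ∃ q : (ℝ × ℝ) × ℝ → ℝ, ContDiffOn ℝ (⊤ : ℕ∞) q (Ω ×ˢ Set.Ioi (0 : ℝ)) ∧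
      (∀ z ∈ Ω ×ˢ Set.Ioi (0 : ℝ),
        (pdt (fun w => (v w).1) z +
            ((v z).1 * pdx1 (fun w => (v w).1) z + (v z).2 * pdx2 (fun w => (v w).1) z) =
          ν * lapx (fun w => (v w).1) z - pdx1 q z) ∧
        (pdt (fun w => (v w).2) z +
            ((v z).1 * pdx1 (fun w => (v w).2) z + (v z).2 * pdx2 (fun w => (v w).2) z) =
          ν * lapx (fun w => (v w).2) z - pdx2 q z)) ∧
      ∀ z ∈ Ω ×ˢ Set.Ioi (0 : ℝ),
        pdx1 (fun w => (v w).1) z + pdx2 (fun w => (v w).2) z = 0)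
    (ω : ℝ × ℝ → ℝ)
    (hω : ω = fun x => pd1 (fun y => (u y).2) x - pd2 (fun y => (u y).1) x) :
    ∀ x ∈ Ω, (u x).1 * pd1 ω x + (u x).2 * pd2 ω x = 0 := by
  obtain ⟨q, hq, hmom, -⟩ := hNS
  intro x hx
  subst hv hω
  have ha : ContDiffOn ℝ (⊤ : ℕ∞) (fun y => (u y).1) Ω := hu.fst
  have hb : ContDiffOn ℝ (⊤ : ℕ∞) (fun y => (u y).2) Ω := hu.snd
  set a : ℝ × ℝ → ℝ := fun y => (u y).1 with ha_def
  set b : ℝ × ℝ → ℝ := fun y => (u y).2 with hb_def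
  set c : ℝ := Real.exp (-(ν * lam * 1)) with hc
  have hc0 : c ≠ 0 := (Real.exp_pos _).ne'
  have hq1 : ContDiffOn ℝ (⊤ : ℕ∞) (fun y => q (y, 1)) Ω :=
    hq.comp (contDiffOn_id.prodMk contDiffOn_const) fun y hy => ⟨hy, by simp⟩
  set Q : ℝ × ℝ → ℝ := fun y => (c ^ 2)⁻¹ * (ν * c * P y - q (y, 1)) with hQ_def
  have hQ : ContDiffOn ℝ (⊤ : ℕ∞) Q Ω :=
    contDiffOn_const.mul ((contDiffOn_const.mul hP).sub hq1)
  have hQe : ∀ y ∈ Ω, ∀ e, fderiv ℝ Q y e =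
      (c ^ 2)⁻¹ * (ν * c * fderiv ℝ P y e - fderiv ℝ (fun y => q (y, 1)) y e) := by
    intro y hy e
    rw [hQ_def, fderiv_const_mul_apply,
      fderiv_fun_sub ((differentiableAt_of_smooth hΩ hP hy).const_mul _)
        (differentiableAt_of_smooth hΩ hq1 hy), sub_apply,
      fderiv_const_mul_apply]
  have key : ∀ y ∈ Ω, a y * pd1 a y + b y * pd2 a y = pd1 Q y ∧
      a y * pd1 b y + b y * pd2 b y = pd2 Q y := by
    intro y hy
    obtain ⟨m1, m2⟩ := hmom (y, 1) ⟨hy, by simp⟩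
    obtain ⟨s1, s2⟩ := heq y hy
    obtain ⟨a1, a2, a3, a4⟩ := separated_derivs (ν * lam) a y 1
    obtain ⟨b1, b2, b3, b4⟩ := separated_derivs (ν * lam) b y 1
    simp only [Prod.smul_fst, Prod.smul_snd, smul_eq_mul] at m1 m2
    change _ + (c * a y * _ + c * b y * _) = _ at m1
    change _ + (c * a y * _ + c * b y * _) = _ at m2
    erw [a1, a2, a3, a4] at m1
    erw [b1, b2, b3, b4] at m2
    rw [← hc] at m1 m2
    have q1 : pd1 Q y = _ := hQe y hy (1, 0)
    have q2 : pd2 Q y = _ := hQe y hy (0, 1)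
    change pd1 Q y = (c ^ 2)⁻¹ * (ν * c * pd1 P y - pdx1 q (y, 1)) at q1
    change pd2 Q y = (c ^ 2)⁻¹ * (ν * c * pd2 P y - pdx2 q (y, 1)) at q2
    rw [q1, q2, ← s1, ← s2]
    change _ = (c ^ 2)⁻¹ * (ν * c * (lap a y + lam * a y) - pdx1 q (y, 1)) ∧
      _ = (c ^ 2)⁻¹ * (ν * c * (lap b y + lam * b y) - pdx2 q (y, 1))
    rw [eq_inv_mul_iff_mul_eq₀ (pow_ne_zero 2 hc0), eq_inv_mul_iff_mul_eq₀ (pow_ne_zero 2 hc0)]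
    constructor
    · linear_combination m1
    · linear_combination m2
  -- `key` holds on a neighbourhood of `x`, so it may be differentiated at `x`.
  have k1 : pd2 (fun y => a y * pd1 a y + b y * pd2 a y) x = pd2 (pd1 Q) x := by
    have : (fun y => a y * pd1 a y + b y * pd2 a y) =ᶠ[nhds x] pd1 Q :=
      Filter.eventually_of_mem (hΩ.mem_nhds hx) fun y hy => (key y hy).1
    unfold pd2 at this ⊢
    rw [this.fderiv_eq]
  have k2 : pd1 (fun y => a y * pd1 b y + b y * pd2 b y) x = pd1 (pd2 Q) x := by
    have : (fun y => a y * pd1 b y + b y * pd2 b y) =ᶠ[nhds x] pd2 Q :=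
      Filter.eventually_of_mem (hΩ.mem_nhds hx) fun y hy => (key y hy).2
    unfold pd1 at this ⊢
    rw [this.fderiv_eq]
  have hcurl := curl_advection hΩ ha hb hx
  rw [k1, k2, pd_comm hΩ hQ hx, sub_self, hdiv x hx, zero_mul, add_zero] at hcurl
  exact hcurl.symm
end

section
/- Let Ω ⊆ ℝ² be open, bounded and connected, let λ ∈ ℝ, let ψ : ℝ² → ℝ and p : ℝ² → ℝ be smooth on Ω, set u = (∂₂ψ, −∂₁ψ), and assume Δu + λu = ∇p and div u = ∂₁u₁ + ∂₂u₂ = 0 on Ω. Set h := Δψ + λψ and assume there is a function H : ℝ² → ℝ, continuous on the closure of Ω, with H = h on Ω. Then ∇p = 0 on Ω if and only if H is constant on the frontier of Ω. -/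
/-!
On `Ω` the Stokes system for `u = (∂₂ψ, -∂₁ψ)` reads `∂₁p = ∂₂h`, `∂₂p = -∂₁h`: the functions `h`
and `p` are conjugate, so `h` is harmonic and `∇p = 0` is the same as `∇h = 0`.

If `∇h = 0` then `h` is constant on the connected open set `Ω`, and so is its continuous extension
`H` on the closure. Conversely, if `H = c` on the frontier, the weak maximum principle
(`le_of_frontier_le`) applied to `h` and `-h` yields `h = c` on `Ω`. The maximum principle is proved
by perturbing `h` to `h + ε x₁²`, whose Laplacian is positive and which therefore has no local
maximum in `Ω`.
-/

open MeasureTheory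

open Filter Topology

/-- The derivative of `f` in the direction `v`; `pd1` and `pd2` are the cases `v = (1, 0)` and
`v = (0, 1)`. -/
noncomputable def dirD (v : ℝ × ℝ) (f : ℝ × ℝ → ℝ) : ℝ × ℝ → ℝ := fun x => fderiv ℝ f x v

lemma pd1_eq_dirD : pd1 = dirD (1, 0) := rfl

lemma pd2_eq_dirD : pd2 = dirD (0, 1) := rfl

section Calculus

variable {Ω : Set (ℝ × ℝ)} {f g : ℝ × ℝ → ℝ} {x : ℝ × ℝ}

lemma dirD_smooth (hΩ : IsOpen Ω) (hf : ContDiffOn ℝ (⊤ : ℕ∞) f Ω) (v : ℝ × ℝ) :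
    ContDiffOn ℝ (⊤ : ℕ∞) (dirD v f) Ω :=
  (hf.fderiv_of_isOpen hΩ (by simp)).clm_apply contDiffOn_const

lemma smooth_differentiableAt (hΩ : IsOpen Ω) (hf : ContDiffOn ℝ (⊤ : ℕ∞) f Ω) (hx : x ∈ Ω) :
    DifferentiableAt ℝ f x :=
  (hf.contDiffAt (hΩ.mem_nhds hx)).differentiableAt (by simp)

lemma dirD_congr (hΩ : IsOpen Ω) (hfg : Set.EqOn f g Ω) (v : ℝ × ℝ) :
    Set.EqOn (dirD v f) (dirD v g) Ω := fun x hx => by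
  have : f =ᶠ[𝓝 x] g := by
    filter_upwards [hΩ.mem_nhds hx] with y hy using hfg hy
  simp only [dirD, this.fderiv_eq]

lemma dirD_add (v : ℝ × ℝ) (hf : DifferentiableAt ℝ f x) (hg : DifferentiableAt ℝ g x) :
    dirD v (fun y => f y + g y) x = dirD v f x + dirD v g x := by
  simp only [dirD]
  rw [fderiv_fun_add hf hg]; rfl

lemma dirD_const_mul (v : ℝ × ℝ) (c : ℝ) (hf : DifferentiableAt ℝ f x) :
    dirD v (fun y => c * f y) x = c * dirD v f x := by
  simp only [dirD]
  rw [fderiv_const_mul hf]; rfl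

lemma dirD_neg (v : ℝ × ℝ) : dirD v (fun y => - f y) x = - dirD v f x := by
  simp only [dirD]
  rw [fderiv_fun_neg]; rfl

lemma dirD_comm (hΩ : IsOpen Ω) (hf : ContDiffOn ℝ (⊤ : ℕ∞) f Ω) (v w : ℝ × ℝ) :
    Set.EqOn (dirD v (dirD w f)) (dirD w (dirD v f)) Ω := fun x hx => by
  have hc : ContDiffAt ℝ (⊤ : ℕ∞) f x := hf.contDiffAt (hΩ.mem_nhds hx)
  have hs : IsSymmSndFDerivAt ℝ f x := hc.isSymmSndFDerivAt (by simp; norm_cast)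
  have hd : DifferentiableAt ℝ (fderiv ℝ f) x :=
    (hc.fderiv_right (m := 1) (by norm_cast)).differentiableAt (by simp)
  have key : ∀ a b : ℝ × ℝ, dirD a (dirD b f) x = fderiv ℝ (fderiv ℝ f) x a b := by
    intro a b
    change fderiv ℝ (fun y => fderiv ℝ f y b) x a = _
    rw [fderiv_clm_apply hd (differentiableAt_const b)]
    simp
  rw [key, key]
  exact hs v w

/-- Necessary second order condition at an interior local maximum. If the second derivative along
`v` were positive, the restriction of `f` to the line would also have a local minimum there, hence
be locally constant. -/
lemma dirD_dirD_nonpos (hΩ : IsOpen Ω) (hf : ContDiffOn ℝ (⊤ : ℕ∞) f Ω) (hx : x ∈ Ω)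
    (hmax : IsLocalMax f x) (v : ℝ × ℝ) : dirD v (dirD v f) x ≤ 0 := by
  by_contra! hpos
  set l : ℝ → ℝ × ℝ := fun t => x + t • v with hl
  have hl0 : l 0 = x := by simp [hl]
  have hlc : Continuous l := by fun_prop
  have hld : ∀ t, HasDerivAt l v t := fun t => by
    simpa [hl] using ((hasDerivAt_id t).smul_const v).const_add x
  have hslice : ∀ k : ℝ × ℝ → ℝ, ContDiffOn ℝ (⊤ : ℕ∞) k Ω → ∀ t, l t ∈ Ω →
      HasDerivAt (k ∘ l) (dirD v k (l t)) t := fun k hk t ht =>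
    (smooth_differentiableAt hΩ hk ht).hasFDerivAt.comp_hasDerivAt t (hld t)
  have hmem : ∀ᶠ t in 𝓝 (0 : ℝ), l t ∈ Ω :=
    hlc.continuousAt.eventually_mem (by rw [hl0]; exact hΩ.mem_nhds hx)
  have hd1 : deriv (f ∘ l) =ᶠ[𝓝 0] (dirD v f ∘ l) := by
    filter_upwards [hmem] with t ht using (hslice f hf t ht).deriv
  have hx0 : l 0 ∈ Ω := by rwa [hl0]
  have hd2 : deriv (deriv (f ∘ l)) 0 = dirD v (dirD v f) x := by
    rw [hd1.deriv_eq, (hslice _ (dirD_smooth hΩ hf v) 0 hx0).deriv, hl0]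
  have hmaxl : IsLocalMax (f ∘ l) 0 := by
    have ht : Tendsto l (𝓝 0) (𝓝 x) := by
      have := hlc.tendsto 0
      rwa [hl0] at this
    have := ht.eventually hmax
    filter_upwards [this] with t ht
    simpa [hl0] using ht
  have hminl : IsLocalMin (f ∘ l) 0 :=
    isLocalMin_of_deriv_deriv_pos (by rw [hd2]; exact hpos) hmaxl.deriv_eq_zero
      (hslice f hf 0 hx0).continuousAt
  have hconst : (f ∘ l) =ᶠ[𝓝 0] fun _ => (f ∘ l) 0 := by
    filter_upwards [hmaxl, hminl] with t h1 h2 using le_antisymm h1 h2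
  have h0 : deriv (deriv (f ∘ l)) 0 = 0 := by
    rw [hconst.deriv.deriv_eq]; simp
  linarith

/-- Weak maximum principle for a function `f` that is smooth and harmonic on a bounded open set
and has a continuous extension `H` to the closure. -/
lemma le_of_frontier_le (hΩ : IsOpen Ω) (hbd : Bornology.IsBounded Ω)
    (hf : ContDiffOn ℝ (⊤ : ℕ∞) f Ω) (hlap : ∀ y ∈ Ω, lap f y = 0) {H : ℝ × ℝ → ℝ}
    (hH : ContinuousOn H (closure Ω)) (hHf : ∀ y ∈ Ω, H y = f y) {c : ℝ}
    (hc : ∀ y ∈ frontier Ω, H y ≤ c) (hx : x ∈ Ω) : f x ≤ c := by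
  by_contra! hlt
  obtain ⟨R, hR⟩ := hbd.closure.exists_norm_le
  have hR2 : ∀ y ∈ closure Ω, y.1 ^ 2 ≤ R ^ 2 := fun y hy => by
    have h1 : |y.1| ≤ R := (norm_fst_le y).trans (hR y hy)
    exact sq_le_sq' (by linarith [neg_abs_le y.1]) ((le_abs_self _).trans h1)
  -- `ε` is small enough that the perturbation `ε x₁²` cannot exceed the gap `f x - c`.
  obtain ⟨ε, hε, hεR⟩ : ∃ ε : ℝ, 0 < ε ∧ ε * R ^ 2 < f x - c := by
    refine ⟨(f x - c) / (R ^ 2 + 1), div_pos (by linarith) (by positivity), ?_⟩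
    rw [div_mul_eq_mul_div, div_lt_iff₀ (by positivity)]
    nlinarith
  have hcpt : IsCompact (closure Ω) := hbd.isCompact_closure
  obtain ⟨z, hz, hzmax⟩ := hcpt.exists_isMaxOn ⟨x, subset_closure hx⟩
    (f := fun y => H y + ε * y.1 ^ 2) (hH.add (by fun_prop))
  have hzx : H x + ε * x.1 ^ 2 ≤ H z + ε * z.1 ^ 2 := hzmax (subset_closure hx)
  have hzΩ : z ∈ Ω := by
    by_contra hzn
    have hzf : z ∈ frontier Ω := ⟨hz, by rwa [hΩ.interior_eq]⟩
    have h1 := hc z hzf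
    have h2 := mul_le_mul_of_nonneg_left (hR2 z hz) hε.le
    have h3 : 0 ≤ ε * x.1 ^ 2 := by positivity
    rw [hHf x hx] at hzx
    linarith
  set q : ℝ × ℝ → ℝ := fun y => ε * y.1 ^ 2 with hq
  have hqs : ContDiffOn ℝ (⊤ : ℕ∞) q Ω := by
    apply ContDiff.contDiffOn; fun_prop
  have hmax : IsLocalMax (fun y => f y + q y) z := by
    filter_upwards [hΩ.mem_nhds hzΩ] with y hy
    have : H y + ε * y.1 ^ 2 ≤ H z + ε * z.1 ^ 2 := hzmax (subset_closure hy)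
    rw [hHf y hy, hHf z hzΩ] at this
    exact this
  have hsum : ∀ v, dirD v (dirD v (fun y => f y + q y)) z
      = dirD v (dirD v f) z + dirD v (dirD v q) z := fun v => by
    rw [dirD_congr hΩ (g := fun y => dirD v f y + dirD v q y) (fun y hy =>
      dirD_add v (smooth_differentiableAt hΩ hf hy) (smooth_differentiableAt hΩ hqs hy)) v hzΩ]
    exact dirD_add v (smooth_differentiableAt hΩ (dirD_smooth hΩ hf v) hzΩ)
      (smooth_differentiableAt hΩ (dirD_smooth hΩ hqs v) hzΩ)
  have hqv : ∀ v : ℝ × ℝ, dirD v q = fun y => 2 * ε * v.1 * y.1 := fun v => by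
    funext y
    have h1 : HasFDerivAt (fun y : ℝ × ℝ => y.1) (ContinuousLinearMap.fst ℝ ℝ ℝ) y := hasFDerivAt_fst
    have h2 := (h1.pow 2).const_mul ε
    simp only [dirD, hq]
    rw [h2.fderiv]
    simp
    ring
  have hqvv : ∀ v : ℝ × ℝ, dirD v (dirD v q) z = 2 * ε * v.1 * v.1 := fun v => by
    have h1 : HasFDerivAt (fun y : ℝ × ℝ => y.1) (ContinuousLinearMap.fst ℝ ℝ ℝ) z := hasFDerivAt_fst
    have h2 := h1.const_mul (2 * ε * v.1)
    rw [hqv]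
    simp only [dirD]
    rw [h2.fderiv]
    simp
  have n1 := dirD_dirD_nonpos hΩ (hf.add hqs) hzΩ hmax (1, 0)
  have n2 := dirD_dirD_nonpos hΩ (hf.add hqs) hzΩ hmax (0, 1)
  have e1 := hsum (1, 0)
  have e2 := hsum (0, 1)
  rw [hqvv] at e1 e2
  have hl := hlap z hzΩ
  simp only [lap, pd1_eq_dirD, pd2_eq_dirD] at hl
  change dirD (1, 0) (dirD (1, 0) (fun y => f y + q y)) z ≤ 0 at n1
  change dirD (0, 1) (dirD (0, 1) (fun y => f y + q y)) z ≤ 0 at n2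
  simp only at e1 e2
  linarith

lemma lap_smooth (hΩ : IsOpen Ω) (hf : ContDiffOn ℝ (⊤ : ℕ∞) f Ω) :
    ContDiffOn ℝ (⊤ : ℕ∞) (lap f) Ω :=
  (dirD_smooth hΩ (dirD_smooth hΩ hf _) _).add (dirD_smooth hΩ (dirD_smooth hΩ hf _) _)

lemma lap_neg : lap (fun y => - f y) x = - lap f x := by
  have h1 : ∀ v, dirD v (fun y => - f y) = fun y => - dirD v f y := fun v => by
    funext y; exact dirD_neg v
  simp only [lap, pd1_eq_dirD, pd2_eq_dirD, h1, dirD_neg]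
  ring

lemma dirD_lap (hΩ : IsOpen Ω) (hf : ContDiffOn ℝ (⊤ : ℕ∞) f Ω) (v : ℝ × ℝ) (hx : x ∈ Ω) :
    dirD v (lap f) x = lap (dirD v f) x := by
  have h3 : ∀ w, dirD v (dirD w (dirD w f)) x = dirD w (dirD w (dirD v f)) x := fun w => by
    rw [dirD_comm hΩ (dirD_smooth hΩ hf w) v w hx]
    exact dirD_congr hΩ (dirD_comm hΩ hf v w) w hx
  have hd : ∀ w, DifferentiableAt ℝ (dirD w (dirD w f)) x := fun w =>
    smooth_differentiableAt hΩ (dirD_smooth hΩ (dirD_smooth hΩ hf w) w) hx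
  have h4 := dirD_add v (hd (1, 0)) (hd (0, 1))
  rw [h3, h3] at h4
  exact h4

end Calculus

theorem stmt17 (Ω : Set (ℝ × ℝ)) (hΩ : IsOpen Ω) (hbd : Bornology.IsBounded Ω)
    (hconn : IsConnected Ω) (lam : ℝ)
    (ψ : ℝ × ℝ → ℝ) (p : ℝ × ℝ → ℝ)
    (hψ : ContDiffOn ℝ (⊤ : ℕ∞) ψ Ω) (hp : ContDiffOn ℝ (⊤ : ℕ∞) p Ω)
    (u : ℝ × ℝ → ℝ × ℝ) (hu : u = fun x => (pd2 ψ x, - pd1 ψ x))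
    (heq : ∀ x ∈ Ω,
      lap (fun y => (u y).1) x + lam * (u x).1 = pd1 p x ∧
      lap (fun y => (u y).2) x + lam * (u x).2 = pd2 p x)
    (hdiv : ∀ x ∈ Ω, pd1 (fun y => (u y).1) x + pd2 (fun y => (u y).2) x = 0)
    (h : ℝ × ℝ → ℝ) (hh : h = fun x => lap ψ x + lam * ψ x)
    (H : ℝ × ℝ → ℝ) (hHcont : ContinuousOn H (closure Ω))
    (hHh : ∀ x ∈ Ω, H x = h x) :
    (∀ x ∈ Ω, pd1 p x = 0 ∧ pd2 p x = 0) ↔ (∃ c : ℝ, ∀ x ∈ frontier Ω, H x = c) := by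
  have hhs : ContDiffOn ℝ (⊤ : ℕ∞) h Ω := by
    rw [hh]; exact (lap_smooth hΩ hψ).add (contDiffOn_const.mul hψ)
  have hdh : ∀ v, ∀ x ∈ Ω, dirD v h x = lap (dirD v ψ) x + lam * dirD v ψ x := fun v x hx => by
    have hψx := smooth_differentiableAt hΩ hψ hx
    rw [hh, dirD_add v (smooth_differentiableAt hΩ (lap_smooth hΩ hψ) hx) (hψx.const_mul lam),
      dirD_const_mul v lam hψx, dirD_lap hΩ hψ v hx]
  have hp1 : ∀ x ∈ Ω, pd2 h x = pd1 p x := fun x hx => by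
    rw [← (heq x hx).1, hu, pd2_eq_dirD]
    exact hdh (0, 1) x hx
  have hp2 : ∀ x ∈ Ω, pd1 h x = - pd2 p x := fun x hx => by
    have h1 := (heq x hx).2
    rw [hu] at h1
    simp only [lap_neg] at h1
    have h2 := hdh (1, 0) x hx
    simp only [pd1_eq_dirD] at h1 ⊢
    linarith
  have hlap : ∀ x ∈ Ω, lap h x = 0 := fun x hx => by
    have e1 : pd1 (pd1 h) x = - pd1 (pd2 p) x :=
      (dirD_congr hΩ (fun y hy => hp2 y hy) (1, 0) hx).trans (dirD_neg (1, 0))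
    have e2 : pd2 (pd2 h) x = pd2 (pd1 p) x := dirD_congr hΩ (fun y hy => hp1 y hy) (0, 1) hx
    have e3 : pd1 (pd2 p) x = pd2 (pd1 p) x := dirD_comm hΩ hp (1, 0) (0, 1) hx
    rw [lap, e1, e2, e3]
    ring
  constructor
  · intro hgrad
    have hfd : Set.EqOn (fderiv ℝ h) 0 Ω := fun x hx => by
      have a1 : fderiv ℝ h x (1, 0) = 0 := by
        have := hp2 x hx
        rwa [(hgrad x hx).2, neg_zero] at this
      have a2 : fderiv ℝ h x (0, 1) = 0 := (hp1 x hx).trans (hgrad x hx).1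
      ext
      · simpa using a1
      · simpa using a2
    obtain ⟨c, hc⟩ := hΩ.exists_is_const_of_fderiv_eq_zero hconn.isPreconnected
      (fun x hx => (smooth_differentiableAt hΩ hhs hx).differentiableWithinAt) hfd
    have hHc : Set.EqOn H (fun _ => c) (closure Ω) :=
      Set.EqOn.of_subset_closure (fun x hx => (hHh x hx).trans (hc x hx)) hHcont
        continuousOn_const subset_closure subset_rfl
    exact ⟨c, fun x hx => hHc (frontier_subset_closure hx)⟩
  · rintro ⟨c, hc⟩ x hx
    have hconst : Set.EqOn h (fun _ => c) Ω := fun y hy => by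
      apply le_antisymm
      · exact le_of_frontier_le hΩ hbd hhs hlap hHcont hHh (fun z hz => (hc z hz).le) hy
      · have := le_of_frontier_le (f := fun y => - h y) (H := fun y => - H y) (c := -c) hΩ hbd
          hhs.neg (fun z hz => by rw [lap_neg, hlap z hz, neg_zero]) hHcont.neg
          (fun z hz => by rw [hHh z hz]) (fun z hz => by rw [hc z hz]) hy
        exact neg_le_neg_iff.mp this
    have hz : ∀ v, dirD v h x = 0 := fun v => by
      rw [dirD_congr hΩ hconst v hx]
      simp [dirD]
    refine ⟨(hp1 x hx).symm.trans (hz (0, 1)), ?_⟩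
    have h1 := hp2 x hx
    have h2 : pd1 h x = 0 := hz (1, 0)
    linarith
end
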